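/- arXiv:1909.03663 — 6 statements merged into one kernel-verified Lean document; each statement's English description precedes it below -/
import Mathlib

section
/- Let P = ∑_{j∈ℤ} a_j D^j and Q = ∑_{j∈ℤ} b_j D^j be Laurent polynomial operators on 𝒮 (with finitely supported coefficient families a, b : ℤ → 𝔽), and set L := φ* ∘ P + Q and R := φ* ∘ P − φ*(Q). Then R ∘ L = L ∘ R = φ*(P) ∘ P − φ*(Q) ∘ Q. In particular, R ∘ L is a Laurent polynomial operator in D (it contains no reflection term): explicitly, for every u ∈ 𝒮 and every k ∈ ℤ, (R(L u))_k = (L(R u))_k = ∑_{i,j} a_i a_j u_{k−i+j} − ∑_{i,j} b_i b_j u_{k−i+j}. -/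
/-!
Expanding either composition gives a pure `P` part, a pure `Q` part and two mixed parts. Since
conjugation by `φ*` turns `D` into `D⁻¹`, and Laurent polynomials in `D` commute, the mixed parts
cancel and the pure parts are `φ*(P) ∘ P` and `-φ*(Q) ∘ Q`. On coefficients, each of these identities
is an interchange of two finite sums, `laurent_sum_swap`.
-/

/-- Interchange of a double sum over the coefficients of two Laurent polynomials. -/
lemma laurent_sum_swap {𝔽 : Type*} [Field 𝔽] (a b : ℤ →₀ 𝔽) (f g : ℤ → ℤ → 𝔽)
    (hfg : ∀ i j, f i j = g j i) :
    (∑ i ∈ a.support, ∑ j ∈ b.support, a i * (b j * f i j)) =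
      ∑ i ∈ b.support, ∑ j ∈ a.support, b i * (a j * g i j) := by
  rw [Finset.sum_comm]
  refine Finset.sum_congr rfl fun i _ => Finset.sum_congr rfl fun j _ => ?_
  rw [hfg, mul_left_comm]

/-- Let `P = ∑ a_j D^j`, `Q = ∑ b_j D^j` be Laurent polynomial operators on the
space `𝒮 = ℤ → 𝔽` of two-sided sequences (with finitely supported coefficients `a b : ℤ →₀ 𝔽`),
`L := φ* ∘ P + Q` and `R := φ* ∘ P - φ*(Q)`.  Then
`R ∘ L = L ∘ R = φ*(P) ∘ P - φ*(Q) ∘ Q`, i.e. for every `u ∈ 𝒮` and `k ∈ ℤ`,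
`(R (L u)) k = (L (R u)) k = ∑_{i,j} a_i a_j u_{k-i+j} - ∑_{i,j} b_i b_j u_{k-i+j}`. -/
theorem stmt_0 {𝔽 : Type*} [Field 𝔽] (a b : ℤ →₀ 𝔽) (L R : (ℤ → 𝔽) → (ℤ → 𝔽))
    (hL : ∀ (u : ℤ → 𝔽) (k : ℤ),
      L u k = (a.sum fun j aj => aj * u (-k + j)) + (b.sum fun j bj => bj * u (k + j)))
    (hR : ∀ (u : ℤ → 𝔽) (k : ℤ),
      R u k = (a.sum fun j aj => aj * u (-k + j)) - (b.sum fun j bj => bj * u (k - j))) :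
    ∀ (u : ℤ → 𝔽) (k : ℤ),
      R (L u) k =
        (a.sum fun i ai => a.sum fun j aj => ai * aj * u (k - i + j)) -
        (b.sum fun i bi => b.sum fun j bj => bi * bj * u (k - i + j)) ∧
      L (R u) k =
        (a.sum fun i ai => a.sum fun j aj => ai * aj * u (k - i + j)) -
        (b.sum fun i bi => b.sum fun j bj => bi * bj * u (k - i + j)) := by
  intro u k
  constructor
  · -- The mixed terms cancel because `φ* ∘ Q = φ*(Q) ∘ φ*`.
    have hcross := laurent_sum_swap a b (fun i j => u (-k + i + j))
      (fun i j => u (-(k - i) + j)) (fun i j => by congr 1; ring)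
    have haa (i : ℤ) : -(-k + i) = k - i := by ring
    simp only [hR, hL, Finsupp.sum, mul_add, Finset.mul_sum, Finset.sum_add_distrib, hcross,
      haa, mul_assoc]
    ring
  · -- The mixed terms cancel because `φ* ∘ φ*(Q) = Q ∘ φ*`; the pure `Q` terms need
    -- `Q ∘ φ*(Q) = φ*(Q) ∘ Q`.
    have hcross := laurent_sum_swap a b (fun i j => u (-k + i - j))
      (fun i j => u (-(k + i) + j)) (fun i j => by congr 1; ring)
    have hbb := laurent_sum_swap b b (fun i j => u (k + i - j))
      (fun i j => u (k - i + j)) (fun i j => by congr 1; ring)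
    have haa (i : ℤ) : -(-k + i) = k - i := by ring
    simp only [hR, hL, Finsupp.sum, mul_sub, Finset.mul_sum, Finset.sum_sub_distrib, hcross,
      hbb, haa, mul_assoc]
    ring
end

section
/- Fix m ∈ 𝔽 and define linear operators L, R on 𝒮 by (Lu)_k = u_{k+1} − u_k + m·u_{−k} and (Ru)_k = u_k − u_{k−1} + m·u_{−k}. Then for every u ∈ 𝒮 and every k ∈ ℤ, (L(Ru))_k = (R(Lu))_k = u_{k+1} + u_{k−1} + (m² − 2)·u_k; that is, L ∘ R = R ∘ L = D + D⁻¹ + (m² − 2)·Id as operators on 𝒮. -/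
/-- For `L = D - Id + m·φ*` and `R = Id - D⁻¹ + m·φ*` on the space of two-sided
sequences `ℤ → 𝔽`, we have `L ∘ R = R ∘ L = D + D⁻¹ + (m² - 2)·Id`. -/
theorem stmt_2 {𝔽 : Type*} [Field 𝔽] (m : 𝔽) (L R : (ℤ → 𝔽) → (ℤ → 𝔽))
    (hL : ∀ (u : ℤ → 𝔽) (k : ℤ), L u k = u (k + 1) - u k + m * u (-k))
    (hR : ∀ (u : ℤ → 𝔽) (k : ℤ), R u k = u k - u (k - 1) + m * u (-k)) :
    ∀ (u : ℤ → 𝔽) (k : ℤ),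
      L (R u) k = u (k + 1) + u (k - 1) + (m ^ 2 - 2) * u k ∧
      R (L u) k = u (k + 1) + u (k - 1) + (m ^ 2 - 2) * u k := by
  intro u k
  -- Reflection intertwines the two shifts, so the terms of degree one in `m` cancel.
  have h₁ : -(k + 1) = -k - 1 := by ring
  have h₂ : -(k - 1) = -k + 1 := by ring
  constructor
  · simp only [hL, hR, h₁, neg_neg, add_sub_cancel_right]
    ring
  · simp only [hL, hR, h₂, neg_neg, sub_add_cancel]
    ring
end

section
/- Fix m ∈ 𝔽. If u ∈ 𝒮 satisfies u_{k+1} − u_k + m·u_{−k} = 0 for every k ∈ ℤ, then u satisfies the ordinary second-order recurrence u_{k+2} + (m² − 2)·u_{k+1} + u_k = 0 for every k ∈ ℤ. -/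
/-- If a two-sided sequence `u : ℤ → 𝔽` satisfies the recurrence with reflection
`u (k+1) - u k + m · u (-k) = 0` for all `k`, then it satisfies the ordinary second-order
recurrence `u (k+2) + (m² - 2) · u (k+1) + u k = 0` for all `k`. -/
theorem stmt_3 {𝔽 : Type*} [Field 𝔽] (m : 𝔽) (u : ℤ → 𝔽)
    (h : ∀ k : ℤ, u (k + 1) - u k + m * u (-k) = 0) :
    ∀ k : ℤ, u (k + 2) + (m ^ 2 - 2) * u (k + 1) + u k = 0 := by
  intro k
  have h1 := h (k + 1)
  have h2 := h k
  -- Reflecting the index turns the difference `u (-k) - u (-k - 1)` into a multiple of `u (k + 1)`.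
  have h3 := h (-k - 1)
  rw [show k + 1 + 1 = k + 2 by ring, show -(k + 1) = -k - 1 by ring] at h1
  rw [show -k - 1 + 1 = -k by ring, show -(-k - 1) = k + 1 by ring] at h3
  linear_combination h1 - h2 + m * h3
end

section
/- For all k, j ∈ ℤ, the Green's function H satisfies ∑_{l=0}^n a_l·H_{k+l,j} = δ_k^j (Kronecker delta). -/
/-!
For fixed `j`, expanding the determinant `H̃_{k,j}` along its first row shows that it is a linear
combination of the solutions `y_i(k)`, hence a solution of the recurrence in `k`
(`sum_casoratiDet`). It vanishes for `j < k < j + n`, where two rows coincide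
(`casoratiDet_eq_zero`), and a cyclic permutation of the rows gives
`C_{j+1} = (-1)^(n-1) H̃_{j+n,j}` (`casoratiDet_shift`).

The recurrence at `k = j` therefore reads `a_0 C_j + (-1)^(n-1) a_n C_{j+1} = 0`; together with
`C_0 = 1` it shows that no Casoratian vanishes (`casoratian_ne_zero`).

Because of the gap `j < k < j + n` of zeros, cutting a multiple of `H̃_{·,j}` off to the left of
`j + n` (case `j ≥ 0`) or to the right of `j` (case `j < 0`) keeps it a solution at every window
`k, …, k + n` except the one with `k = j`. That window contains a single nonzero value, at `j + n`
or at `j` respectively, and the normalising factor makes its contribution equal to `1`.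
-/

/-- The determinant `H̃_{k,j}`: first row `y_i(k)`, and rows `y_i(j + r)` for `0 < r < n`. -/
def casoratiDet {𝔽 : Type*} [Field 𝔽] {n : ℕ} (y : Fin n → ℤ → 𝔽) (k j : ℤ) : 𝔽 :=
  Matrix.det (Matrix.of fun r i : Fin n =>
    if (r : ℕ) = 0 then y i k else y i (j + (r : ℕ)))

theorem sum_casoratiDet {𝔽 : Type*} [Field 𝔽] {m : ℕ} (a : ℕ → 𝔽) (y : Fin (m + 1) → ℤ → 𝔽)
    (hy : ∀ i (k : ℤ), ∑ l ∈ Finset.range (m + 1 + 1), a l * y i (k + l) = 0) (k j : ℤ) :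
    ∑ l ∈ Finset.range (m + 1 + 1), a l * casoratiDet y (k + l) j = 0 := by
  -- The cofactors along the first row do not involve `k`.
  obtain ⟨c, hc⟩ : ∃ c : Fin (m + 1) → 𝔽, ∀ k, casoratiDet y k j = ∑ i, c i * y i k := by
    refine ⟨fun i => (-1) ^ (i : ℕ) * Matrix.det (Matrix.of fun (r : Fin m) (s : Fin m) =>
      y (i.succAbove s) (j + ((r : ℕ) + 1 : ℕ))), fun k => ?_⟩
    rw [casoratiDet, Matrix.det_succ_row_zero]
    refine Finset.sum_congr rfl fun i _ => ?_
    have : (Matrix.of fun r i : Fin (m + 1) =>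
        if (r : ℕ) = 0 then y i k else y i (j + (r : ℕ))).submatrix Fin.succ i.succAbove =
        Matrix.of fun (r : Fin m) (s : Fin m) => y (i.succAbove s) (j + ((r : ℕ) + 1 : ℕ)) := by
      ext r s
      simp
    rw [this]
    simp only [Matrix.of_apply, Fin.val_zero, if_true]
    ring
  simp only [hc, Finset.mul_sum]
  rw [Finset.sum_comm]
  refine Finset.sum_eq_zero fun i _ => ?_
  rw [← mul_zero (c i), ← hy i k, Finset.mul_sum]
  exact Finset.sum_congr rfl fun l _ => by ring

theorem casoratiDet_eq_zero {𝔽 : Type*} [Field 𝔽] {n : ℕ} (y : Fin n → ℤ → 𝔽) {k j : ℤ}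
    (h1 : j < k) (h2 : k < j + n) : casoratiDet y k j = 0 := by
  obtain ⟨d, rfl⟩ : ∃ d : ℕ, k = j + d := ⟨(k - j).toNat, by omega⟩
  have hd : d < n := by omega
  have hd0 : d ≠ 0 := by omega
  refine Matrix.det_zero_of_row_eq (i := ⟨0, by omega⟩) (j := ⟨d, hd⟩) ?_ ?_
  · simpa [Fin.ext_iff] using hd0.symm
  · ext i
    simp

theorem casoratiDet_shift {𝔽 : Type*} [Field 𝔽] {m : ℕ} (y : Fin (m + 1) → ℤ → 𝔽) (j : ℤ) :
    casoratiDet y (j + 1) (j + 1) = (-1) ^ m * casoratiDet y (j + (m + 1 : ℕ)) j := by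
  have h := Matrix.det_permute (finRotate (m + 1)) (Matrix.of fun r i : Fin (m + 1) =>
    if (r : ℕ) = 0 then y i (j + (m + 1 : ℕ)) else y i (j + (r : ℕ)))
  rw [sign_finRotate] at h
  push_cast at h
  rw [casoratiDet, casoratiDet]
  push_cast
  rw [← h]
  congr 1
  ext r i
  simp only [Matrix.of_apply, Matrix.submatrix_apply, id]
  rcases Fin.eq_castSucc_or_eq_last r with ⟨s, rfl⟩ | rfl
  · have : finRotate (m + 1) s.castSucc = s.succ := by
      rw [finRotate_apply, Fin.coeSucc_eq_succ]
    rw [this]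
    by_cases hs : (s : ℕ) = 0
    · simp [hs]
    · simp [hs, add_assoc, add_comm (1 : ℤ)]
  · rw [finRotate_last]
    by_cases hm : m = 0
    · simp [hm]
    · simp [hm, add_assoc, add_comm (1 : ℤ)]

/-- The recurrence for `H̃_{·,j}` at `k = j`: only the two end terms of the window survive. -/
theorem casoratian_rec {𝔽 : Type*} [Field 𝔽] {m : ℕ} (a : ℕ → 𝔽) (y : Fin (m + 1) → ℤ → 𝔽)
    (hy : ∀ i (k : ℤ), ∑ l ∈ Finset.range (m + 1 + 1), a l * y i (k + l) = 0) (j : ℤ) :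
    a 0 * casoratiDet y j j + (-1) ^ m * (a (m + 1) * casoratiDet y (j + 1) (j + 1)) = 0 := by
  have h := sum_casoratiDet a y hy j j
  rw [Finset.sum_range_succ, Finset.sum_range_succ', Finset.sum_eq_zero] at h
  · have h1 : ((-1 : 𝔽) ^ m) * (-1) ^ m = 1 := by rw [← mul_pow]; simp
    rw [casoratiDet_shift]
    simp only [Nat.cast_zero, add_zero, zero_add] at h
    linear_combination h + a (m + 1) * casoratiDet y (j + (m + 1 : ℕ)) j * h1
  · intro l hl
    have := Finset.mem_range.1 hl
    rw [casoratiDet_eq_zero y (by omega) (by omega), mul_zero]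

theorem casoratian_ne_zero {𝔽 : Type*} [Field 𝔽] {m : ℕ} (a : ℕ → 𝔽) (ha0 : a 0 ≠ 0)
    (han : a (m + 1) ≠ 0) (y : Fin (m + 1) → ℤ → 𝔽)
    (hy : ∀ i (k : ℤ), ∑ l ∈ Finset.range (m + 1 + 1), a l * y i (k + l) = 0)
    (hinit : ∀ i j : Fin (m + 1), y i (j : ℤ) = if i = j then 1 else 0) (j : ℤ) :
    casoratiDet y j j ≠ 0 := by
  have step : ∀ j, casoratiDet y j j = 0 ↔ casoratiDet y (j + 1) (j + 1) = 0 := by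
    intro j
    have h := casoratian_rec a y hy j
    constructor <;> intro h0 <;> simpa [h0, ha0, han] using h
  have zero : casoratiDet y 0 0 = 1 := by
    rw [casoratiDet, ← Matrix.det_one (n := Fin (m + 1))]
    congr 1
    ext r i
    have h := hinit i r
    rw [Matrix.of_apply, Matrix.one_apply, zero_add]
    simp only [eq_comm (a := i)] at h
    rw [← h]
    split_ifs with h0
    · rw [h0, Nat.cast_zero]
    · rfl
  induction j using Int.induction_on with
  | zero => simp [zero]
  | succ i ih => rwa [Ne, ← step]
  | pred i ih => rwa [Ne, step, sub_add_cancel]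

/-- the Green's function `H` of the order-`n` recurrence satisfies
`∑_{l=0}^n a_l H_{k+l,j} = δ_k^j` for all `k, j ∈ ℤ`.  Here `H̃_{k,j}` is the Casorati-type
determinant, `C_j := H̃_{j,j}` the Casoratian, and
`H_{k,j} = (-1)^{n-1} (a_n C_{j+1})⁻¹ H̃_{k,j}` if `k > j ≥ 0`,
`H_{k,j} = (a_0 C_j)⁻¹ H̃_{k,j}` if `j < 0` and `k + 1 - n ≤ j`, and `H_{k,j} = 0`
otherwise. -/
theorem stmt_9 {𝔽 : Type*} [Field 𝔽] (n : ℕ) (hn : 1 ≤ n) (a : ℕ → 𝔽)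
    (ha : a 0 * a n ≠ 0) (y : Fin n → ℤ → 𝔽)
    (hy : ∀ (i : Fin n) (k : ℤ), ∑ l ∈ Finset.range (n + 1), a l * y i (k + l) = 0)
    (hinit : ∀ i j : Fin n, y i (j : ℤ) = if i = j then 1 else 0)
    (Htilde : ℤ → ℤ → 𝔽)
    (hHt : ∀ k j : ℤ, Htilde k j =
      Matrix.det (Matrix.of fun r i : Fin n =>
        if (r : ℕ) = 0 then y i k else y i (j + (r : ℕ))))
    (C : ℤ → 𝔽) (hC : ∀ j : ℤ, C j = Htilde j j)
    (H : ℤ → ℤ → 𝔽)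
    (hH : ∀ k j : ℤ, H k j =
      if 0 ≤ j ∧ j < k then (-1 : 𝔽) ^ (n - 1) * (a n * C (j + 1))⁻¹ * Htilde k j
      else if j < 0 ∧ k + 1 - (n : ℤ) ≤ j then (a 0 * C j)⁻¹ * Htilde k j
      else 0) :
    ∀ k j : ℤ, ∑ l ∈ Finset.range (n + 1), a l * H (k + l) j =
      if k = j then 1 else 0 := by
  obtain ⟨m, rfl⟩ : ∃ m, n = m + 1 := ⟨n - 1, by omega⟩
  have ha0 : a 0 ≠ 0 := left_ne_zero_of_mul ha
  have han : a (m + 1) ≠ 0 := right_ne_zero_of_mul ha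
  have hHt' : ∀ k j, Htilde k j = casoratiDet y k j := hHt
  have hCne : ∀ j, C j ≠ 0 := fun j => by
    rw [hC, hHt']
    exact casoratian_ne_zero a ha0 han y hy hinit j
  have hrec : ∀ (c : 𝔽) (k j : ℤ),
      ∑ l ∈ Finset.range (m + 1 + 1), a l * (c * Htilde (k + l) j) = 0 := by
    intro c k j
    rw [← mul_zero c, ← sum_casoratiDet a y hy k j, Finset.mul_sum]
    exact Finset.sum_congr rfl fun l _ => by rw [hHt']; ring
  have hgap : ∀ k j : ℤ, j < k → k < j + (m + 1 : ℕ) → H k j = 0 := by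
    intro k j h1 h2
    rw [hH, hHt', casoratiDet_eq_zero y h1 h2]
    simp
  intro k j
  rcases le_or_gt 0 j with hj | hj
  · have hlow : ∀ k, k < j + (m + 1 : ℕ) → H k j = 0 := by
      intro k hk
      rcases le_or_gt k j with h | h
      · rw [hH, if_neg (by omega), if_neg (by omega)]
      · exact hgap k j h hk
    rcases lt_trichotomy k j with hk | rfl | hk
    · rw [if_neg (by omega)]
      refine Finset.sum_eq_zero fun l hl => ?_
      have := Finset.mem_range.1 hl
      rw [hlow _ (by omega), mul_zero]
    · rw [if_pos rfl, Finset.sum_range_succ, Finset.sum_eq_zero]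
      · have hs := casoratiDet_shift y k
        rw [← hHt', ← hHt', ← hC] at hs
        have hne := hCne (k + 1)
        rw [zero_add, hH, if_pos ⟨hj, by omega⟩, Nat.add_sub_cancel]
        calc _ = a (m + 1) * (a (m + 1) * C (k + 1))⁻¹ *
              ((-1) ^ m * Htilde (k + (m + 1 : ℕ)) k) := by ring
          _ = 1 := by rw [← hs]; field_simp
      · intro l hl
        have := Finset.mem_range.1 hl
        rw [hlow _ (by omega), mul_zero]
    · rw [if_neg (by omega), ← hrec ((-1 : 𝔽) ^ (m + 1 - 1) * (a (m + 1) * C (j + 1))⁻¹) k j]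
      refine Finset.sum_congr rfl fun l _ => ?_
      rw [hH, if_pos ⟨hj, by omega⟩]
  · have hhigh : ∀ k, j < k → H k j = 0 := by
      intro k hk
      rcases lt_or_ge k (j + (m + 1 : ℕ)) with h | h
      · exact hgap k j hk h
      · rw [hH, if_neg (by omega), if_neg (by omega)]
    rcases lt_trichotomy k j with hk | rfl | hk
    · rw [if_neg (by omega), ← hrec (a 0 * C j)⁻¹ k j]
      refine Finset.sum_congr rfl fun l hl => ?_
      have := Finset.mem_range.1 hl
      rw [hH, if_neg (by omega), if_pos ⟨hj, by omega⟩]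
    · rw [if_pos rfl, Finset.sum_range_succ', Finset.sum_eq_zero]
      · have hne := hCne k
        rw [zero_add, Nat.cast_zero, add_zero, hH, if_neg (by omega), if_pos ⟨hj, by omega⟩, ← hC]
        field_simp
      · intro l _
        rw [hhigh _ (by omega), mul_zero]
    · rw [if_neg (by omega)]
      refine Finset.sum_eq_zero fun l _ => ?_
      rw [hhigh _ (by omega), mul_zero]
end

section
/- Let W_1, …, W_n : 𝒮 → 𝔽 be linear functionals on the space 𝒮 of sequences ℤ → 𝔽, let c : ℤ → 𝔽, h = (h_1, …, h_n) ∈ 𝔽^n, and let M ∈ M_n(𝔽) be the matrix with entries M_{ij} = W_i(y_j). Then the boundary value problem 'Sx = c and W_i(x) = h_i for i = 1, …, n' has a unique solution x : ℤ → 𝔽 if and only if det M ≠ 0; in that case the unique solution is x = ∑_{j=1}^n K_j·y_j + Hc, where w := (W_1(Hc), …, W_n(Hc)) and K := M^{−1}(h − w). -/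
/-!
A homogeneous solution that vanishes on `{0, …, n - 1}` vanishes everywhere, because `a 0 ≠ 0` and
`a n ≠ 0` allow the recurrence to be run in both directions (`eq_zero_of_recurrence`). Subtracting
`Hc` and matching initial values, the solutions of `Sx = c` are therefore exactly the sequences
`∑ j, K j * y j + Hc` (`solution_eq`, `recurrence_comb`), and `K` is determined by the sequence.
Applying the functionals turns the boundary conditions into the linear system
`M K = h - w` (`functional_comb`), which is uniquely solvable if and only if `det M ≠ 0`.
-/

/-- The induction propagates a window of `n` consecutive zeros one step to the right
(dividing by `a n`) and one step to the left (dividing by `a 0`). -/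
lemma eq_zero_of_recurrence {𝔽 : Type*} [Field 𝔽] {n : ℕ} {a : ℕ → 𝔽}
    (ha : a 0 * a n ≠ 0) {u : ℤ → 𝔽}
    (hu : ∀ k : ℤ, ∑ l ∈ Finset.range (n + 1), a l * u (k + l) = 0)
    (h0 : ∀ j : Fin n, u (j : ℤ) = 0) : u = 0 := by
  have ha0 : a 0 ≠ 0 := left_ne_zero_of_mul ha
  have han : a n ≠ 0 := right_ne_zero_of_mul ha
  have right (k : ℤ) (hk : ∀ l < n, u (k + (l : ℕ)) = 0) : u (k + n) = 0 := by
    have h1 := hu k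
    rw [Finset.sum_range_succ, Finset.sum_eq_zero, zero_add] at h1
    · exact (mul_eq_zero.mp h1).resolve_left han
    · intro l hl
      rw [hk l (Finset.mem_range.mp hl), mul_zero]
  have left (k : ℤ) (hk : ∀ l < n, u (k + 1 + (l : ℕ)) = 0) : u k = 0 := by
    have h1 := hu k
    rw [Finset.sum_range_succ', Finset.sum_eq_zero, zero_add] at h1
    · simpa using (mul_eq_zero.mp h1).resolve_left ha0
    · intro l hl
      have h2 := hk l (Finset.mem_range.mp hl)
      rw [add_assoc, add_comm 1 (l : ℤ)] at h2
      push_cast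
      rw [h2, mul_zero]
  have window (k : ℤ) : ∀ l < n, u (k + (l : ℕ)) = 0 := by
    induction k using Int.induction_on with
    | zero =>
      intro l hl
      simpa using h0 ⟨l, hl⟩
    | succ i ih =>
      intro l hl
      rw [add_assoc, add_comm 1 (l : ℤ)]
      rcases Nat.lt_or_ge (l + 1) n with h1 | h1
      · exact_mod_cast ih (l + 1) h1
      · have h2 : n = l + 1 := by omega
        have h3 := right i ih
        rw [h2] at h3
        exact_mod_cast h3
    | pred i ih =>
      intro l hl
      cases l with
      | zero =>
        rw [Nat.cast_zero, add_zero]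
        exact left _ (by simpa using ih)
      | succ l =>
        have h1 := ih l (by omega)
        rw [← h1]
        congr 1
        push_cast
        ring
  funext k
  -- For `n = 0` the window is empty, but `right` still applies.
  have h1 := right (k - n) (window _)
  simpa using h1

section

variable {𝔽 : Type*} [Field 𝔽] {n : ℕ} {a : ℕ → 𝔽} {y : Fin n → ℤ → 𝔽} {c Hc : ℤ → 𝔽}

lemma recurrence_comb
    (hy : ∀ (i : Fin n) (k : ℤ), ∑ l ∈ Finset.range (n + 1), a l * y i (k + l) = 0)
    (hHc : ∀ k : ℤ, ∑ l ∈ Finset.range (n + 1), a l * Hc (k + l) = c k)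
    (K : Fin n → 𝔽) (k : ℤ) :
    ∑ l ∈ Finset.range (n + 1), a l * ((∑ j, K j * y j (k + l)) + Hc (k + l)) = c k := by
  simp only [mul_add, Finset.sum_add_distrib, hHc, Finset.mul_sum]
  rw [Finset.sum_comm, Finset.sum_eq_zero, zero_add]
  intro j _
  rw [← mul_zero (K j), ← hy j k, Finset.mul_sum]
  exact Finset.sum_congr rfl fun l _ => by ring

lemma comb_apply
    (hinit : ∀ i j : Fin n, y i (j : ℤ) = if i = j then 1 else 0)
    (K : Fin n → 𝔽) (i : Fin n) : ∑ j, K j * y j (i : ℤ) = K i := by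
  simp [hinit]

/-- The coefficients are the initial values of the solution. -/
lemma solution_eq (ha : a 0 * a n ≠ 0)
    (hy : ∀ (i : Fin n) (k : ℤ), ∑ l ∈ Finset.range (n + 1), a l * y i (k + l) = 0)
    (hinit : ∀ i j : Fin n, y i (j : ℤ) = if i = j then 1 else 0)
    (hHc : ∀ k : ℤ, ∑ l ∈ Finset.range (n + 1), a l * Hc (k + l) = c k)
    (hHc0 : ∀ j : Fin n, Hc (j : ℤ) = 0) {x : ℤ → 𝔽}
    (hx : ∀ k : ℤ, ∑ l ∈ Finset.range (n + 1), a l * x (k + l) = c k) :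
    x = fun k : ℤ => (∑ j : Fin n, x (j : ℤ) * y j k) + Hc k := by
  rw [← sub_eq_zero]
  apply eq_zero_of_recurrence ha
  · intro k
    simp only [Pi.sub_apply, mul_sub, Finset.sum_sub_distrib, hx]
    rw [recurrence_comb hy hHc, sub_self]
  · intro i
    simp only [Pi.sub_apply]
    rw [comb_apply hinit (fun j : Fin n => x (j : ℤ)) i, hHc0, add_zero, sub_self]

lemma functional_comb {W : Fin n → (ℤ → 𝔽) →ₗ[𝔽] 𝔽}
    {M : Matrix (Fin n) (Fin n) 𝔽} (hM : ∀ i j : Fin n, M i j = W i (y j))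
    (K : Fin n → 𝔽) (i : Fin n) :
    W i (fun k : ℤ => (∑ j : Fin n, K j * y j k) + Hc k) = M.mulVec K i + W i Hc := by
  have h1 : (fun k : ℤ => (∑ j : Fin n, K j * y j k) + Hc k) = (∑ j, K j • y j) + Hc := by
    funext k
    simp
  rw [h1, map_add, map_sum]
  simp only [map_smul, smul_eq_mul, Matrix.mulVec, dotProduct, hM, mul_comm]

end

/-- for linear functionals `W_1, …, W_n` on the space of sequences `ℤ → 𝔽`,
the boundary value problem `Sx = c`, `W_i x = h_i` (`i = 1, …, n`) has a unique solution
if and only if `det M ≠ 0`, where `M_{ij} = W_i(y_j)`; in that case the unique solution is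
`x = ∑_j K_j y_j + Hc` with `w = (W_1(Hc), …, W_n(Hc))` and `K = M⁻¹ (h - w)`. -/
theorem stmt_11 {𝔽 : Type*} [Field 𝔽] (n : ℕ) (hn : 1 ≤ n) (a : ℕ → 𝔽)
    (ha : a 0 * a n ≠ 0) (y : Fin n → ℤ → 𝔽)
    (hy : ∀ (i : Fin n) (k : ℤ), ∑ l ∈ Finset.range (n + 1), a l * y i (k + l) = 0)
    (hinit : ∀ i j : Fin n, y i (j : ℤ) = if i = j then 1 else 0)
    (c : ℤ → 𝔽) (Hc : ℤ → 𝔽)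
    (hHc : ∀ k : ℤ, ∑ l ∈ Finset.range (n + 1), a l * Hc (k + l) = c k)
    (hHc0 : ∀ j : Fin n, Hc (j : ℤ) = 0)
    (W : Fin n → (ℤ → 𝔽) →ₗ[𝔽] 𝔽) (h : Fin n → 𝔽)
    (M : Matrix (Fin n) (Fin n) 𝔽) (hM : ∀ i j : Fin n, M i j = W i (y j)) :
    ((∃! x : ℤ → 𝔽,
        (∀ k : ℤ, ∑ l ∈ Finset.range (n + 1), a l * x (k + l) = c k) ∧
        ∀ i : Fin n, W i x = h i) ↔ M.det ≠ 0) ∧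
    (M.det ≠ 0 →
      ∀ x : ℤ → 𝔽,
        ((∀ k : ℤ, ∑ l ∈ Finset.range (n + 1), a l * x (k + l) = c k) ∧
          ∀ i : Fin n, W i x = h i) ↔
        x = fun k : ℤ =>
          (∑ j : Fin n, M⁻¹.mulVec (h - fun i : Fin n => W i Hc) j * y j k) + Hc k) := by
  have formula : M.det ≠ 0 → ∀ x : ℤ → 𝔽,
      ((∀ k : ℤ, ∑ l ∈ Finset.range (n + 1), a l * x (k + l) = c k) ∧
        ∀ i : Fin n, W i x = h i) ↔
      x = fun k : ℤ =>
        (∑ j : Fin n, M⁻¹.mulVec (h - fun i : Fin n => W i Hc) j * y j k) + Hc k := by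
    intro hdet x
    have hunit : IsUnit M.det := isUnit_iff_ne_zero.mpr hdet
    constructor
    · rintro ⟨hx, hW⟩
      have hrep := solution_eq ha hy hinit hHc hHc0 hx
      have hK : M.mulVec (fun j : Fin n => x (j : ℤ)) = h - fun i : Fin n => W i Hc := by
        funext i
        have h1 := functional_comb (Hc := Hc) hM (fun j : Fin n => x (j : ℤ)) i
        rw [← hrep, hW] at h1
        simp [h1]
      rw [← hK, Matrix.mulVec_mulVec, Matrix.nonsing_inv_mul _ hunit, Matrix.one_mulVec]
      exact hrep
    · rintro rfl
      refine ⟨recurrence_comb hy hHc _, fun i => ?_⟩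
      rw [functional_comb hM, Matrix.mulVec_mulVec, Matrix.mul_nonsing_inv _ hunit,
        Matrix.one_mulVec]
      simp
  refine ⟨⟨?_, fun hdet => ⟨_, (formula hdet _).mpr rfl, fun x hx => (formula hdet x).mp hx⟩⟩,
    formula⟩
  rintro ⟨x, ⟨hx, hW⟩, huniq⟩ hdet
  obtain ⟨v, hv, hMv⟩ := Matrix.exists_mulVec_eq_zero_iff.mpr hdet
  -- A kernel vector `v` of `M` yields a second solution `∑ j, v j * y j + x`.
  have h1 := huniq (fun k : ℤ => (∑ j : Fin n, v j * y j k) + x k)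
    ⟨recurrence_comb hy hx v, fun i => by rw [functional_comb hM, hMv, hW]; simp⟩
  apply hv
  funext i
  have h2 := congrFun h1 (i : ℤ)
  simp only [comb_apply hinit] at h2
  simpa using h2
end

section
/- Assume M₁ := fromBlocks(F,G,B,A) and M₂ := fromBlocks(A,B,G,F) are invertible 2n×2n matrices, and set N := −M₁⁻¹·M₂ (which is invertible, so its integer powers N^k, k ∈ ℤ, are defined). For k ∈ ℤ let M(k) ∈ M_n(𝔽) be the sum of the top-left and top-right n×n blocks of N^k. Then for every u₀ ∈ 𝔽^n, the sequence u : ℤ → 𝔽^n defined by u_k := M(k)·u₀ satisfies F·u_{k+1} + G·u_{−k−1} + A·u_k + B·u_{−k} = 0 for every k ∈ ℤ and u_0 = u₀; moreover, it is the unique such sequence: any v : ℤ → 𝔽^n satisfying F·v_{k+1} + G·v_{−k−1} + A·v_k + B·v_{−k} = 0 for all k ∈ ℤ and v_0 = u₀ equals u. -/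
/-!
Put `P = fromBlocks F G B A` and `Q = fromBlocks A B G F`.  A sequence `u` solves the equation with
reflection iff the doubled sequence `y k = (u k, u (-k))` solves the first-order recurrence
`P y (k+1) + Q y k = 0`: the upper row is the equation at `k`, the lower row the equation at
`-k - 1`.  As `P` and `Q` are invertible, a solution of this recurrence is determined by `y 0`
(`eq_of_recurrence`), which gives uniqueness.

For existence, `w k = N ^ k (u₀, u₀)` solves the recurrence, and the point is that `w` is a doubled
sequence.  Exchanging the two halves of a vector turns `P` into `Q` and vice versa
(`fromBlocks_mulVec_comp_swap`), so `k ↦ swap (w (-k))` solves the same recurrence with the same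
value at `0`, hence equals `w`.
-/

open Matrix

/-- A two-sided recurrence `P y (k+1) + Q y k = 0` with both coefficients invertible can be solved
in either direction, so its solutions are determined by their value at `0`. -/
theorem eq_of_recurrence {𝔽 ι : Type*} [Field 𝔽] [Fintype ι] [DecidableEq ι]
    {P Q : Matrix ι ι 𝔽} (hP : IsUnit P) (hQ : IsUnit Q) {y z : ℤ → ι → 𝔽}
    (hy : ∀ k, P *ᵥ y (k + 1) + Q *ᵥ y k = 0) (hz : ∀ k, P *ᵥ z (k + 1) + Q *ᵥ z k = 0)
    (h0 : y 0 = z 0) (k : ℤ) : y k = z k := by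
  induction k using Int.induction_on with
  | zero => exact h0
  | succ k ih =>
    apply mulVec_injective_of_isUnit hP
    have h := (hy k).trans (hz k).symm
    rw [ih] at h
    exact add_right_cancel h
  | pred k ih =>
    apply mulVec_injective_of_isUnit hQ
    have h := (hy (-k - 1)).trans (hz (-k - 1)).symm
    rw [sub_add_cancel, ih] at h
    exact add_left_cancel h

/-- Exchanging the two halves of a vector conjugates a block matrix to the one with both its block
rows and its block columns exchanged. -/
theorem fromBlocks_mulVec_comp_swap {𝔽 m : Type*} [Field 𝔽] [Fintype m]
    (A B F G : Matrix m m 𝔽) (x : m ⊕ m → 𝔽) :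
    fromBlocks F G B A *ᵥ (x ∘ Sum.swap) = (fromBlocks A B G F *ᵥ x) ∘ Sum.swap := by
  rw [fromBlocks_mulVec, fromBlocks_mulVec]
  ext i
  rcases i with i | i <;>
    simp [Function.comp_def, add_comm]

/-- The equation with reflection is equivalent to a first-order recurrence for the doubled
sequence `(u k, u (-k))`. -/
theorem reflection_iff_recurrence {𝔽 m : Type*} [Field 𝔽] [Fintype m]
    (A B F G : Matrix m m 𝔽) (u : ℤ → m → 𝔽) :
    (∀ k : ℤ, F *ᵥ u (k + 1) + G *ᵥ u (-k - 1) + A *ᵥ u k + B *ᵥ u (-k) = 0) ↔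
      ∀ k : ℤ, fromBlocks F G B A *ᵥ Sum.elim (u (k + 1)) (u (-(k + 1))) +
        fromBlocks A B G F *ᵥ Sum.elim (u k) (u (-k)) = 0 := by
  simp only [fromBlocks_mulVec, Sum.elim_comp_inl, Sum.elim_comp_inr, neg_add']
  constructor
  · intro h k
    ext i
    rcases i with i | i
    · simpa [add_assoc] using congrFun (h k) i
    · have h' := congrFun (h (-k - 1)) i
      rw [show -k - 1 + 1 = -k by ring, show -(-k - 1) - 1 = k by ring,
        show -(-k - 1) = k + 1 by ring] at h'
      simp only [Pi.add_apply, Pi.zero_apply, Sum.elim_inr] at h' ⊢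
      rw [← h']
      ring
  · intro h k
    ext i
    simpa [add_assoc] using congrFun (h k) (Sum.inl i)

/-- assume `M₁ := fromBlocks(F,G,B,A)` and `M₂ := fromBlocks(A,B,G,F)` are
invertible, and set `N := -M₁⁻¹ M₂` (integer powers `N^k`, `k ∈ ℤ`, are defined).  For
`k ∈ ℤ` let `M(k)` be the sum of the top-left and top-right `n×n` blocks of `N^k`.  Then
for every `u₀ ∈ 𝔽^n` the sequence `u_k := M(k) u₀` is the unique solution of the
homogeneous system with reflection
`F u_{k+1} + G u_{-k-1} + A u_k + B u_{-k} = 0`, `k ∈ ℤ`, with `u_0 = u₀`. -/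
theorem stmt_13 {𝔽 : Type*} [Field 𝔽] (n : ℕ) (hn : 1 ≤ n)
    (A B F G : Matrix (Fin n) (Fin n) 𝔽)
    (h1 : IsUnit (Matrix.fromBlocks F G B A)) (h2 : IsUnit (Matrix.fromBlocks A B G F))
    (N : Matrix (Fin n ⊕ Fin n) (Fin n ⊕ Fin n) 𝔽)
    (hN : N = -((Matrix.fromBlocks F G B A)⁻¹ * Matrix.fromBlocks A B G F))
    (M : ℤ → Matrix (Fin n) (Fin n) 𝔽)
    (hM : ∀ k : ℤ, M k = (N ^ k).toBlocks₁₁ + (N ^ k).toBlocks₁₂) :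
    ∀ (u₀ : Fin n → 𝔽) (u : ℤ → Fin n → 𝔽),
      (∀ k : ℤ, u k = (M k).mulVec u₀) →
      ((∀ k : ℤ, F.mulVec (u (k + 1)) + G.mulVec (u (-k - 1)) + A.mulVec (u k) +
          B.mulVec (u (-k)) = 0) ∧
        u 0 = u₀ ∧
        ∀ v : ℤ → Fin n → 𝔽,
          (∀ k : ℤ, F.mulVec (v (k + 1)) + G.mulVec (v (-k - 1)) + A.mulVec (v k) +
            B.mulVec (v (-k)) = 0) → v 0 = u₀ → v = u) := by
  intro u₀ u hu
  have hP := (isUnit_iff_isUnit_det _).1 h1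
  have hNdet : IsUnit N.det := by
    rw [← isUnit_iff_isUnit_det, hN]
    exact (((isUnit_nonsing_inv_iff).2 h1).mul h2).neg
  have hPN : fromBlocks F G B A * N = -fromBlocks A B G F := by
    rw [hN, mul_neg, mul_nonsing_inv_cancel_left _ _ hP]
  let w : ℤ → Fin n ⊕ Fin n → 𝔽 := fun k => (N ^ k) *ᵥ Sum.elim u₀ u₀
  have hw0 : w 0 = Sum.elim u₀ u₀ := by simp [w]
  have hw : ∀ k, fromBlocks F G B A *ᵥ w (k + 1) + fromBlocks A B G F *ᵥ w k = 0 := by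
    intro k
    have hpow : N ^ (k + 1) = N * N ^ k := by
      rw [add_comm, zpow_one_add hNdet]
    simp only [w]
    rw [hpow, mulVec_mulVec, ← Matrix.mul_assoc, hPN, Matrix.neg_mul, neg_mulVec,
      ← mulVec_mulVec, neg_add_cancel]
  have hswap : ∀ k, w k = w (-k) ∘ Sum.swap := by
    refine eq_of_recurrence (z := fun k => w (-k) ∘ Sum.swap) h1 h2 hw (fun k => ?_) ?_
    · -- the recurrence for `w` at `-(k + 1)`, with the halves exchanged
      have h := hw (-(k + 1))
      rw [show -(k + 1) + 1 = -k by ring] at h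
      rw [fromBlocks_mulVec_comp_swap, fromBlocks_mulVec_comp_swap]
      ext i
      simpa [add_comm] using congrFun h i.swap
    · ext i
      rcases i with i | i <;> simp [hw0]
  have huw : ∀ k i, u k i = w k (Sum.inl i) := by
    intro k i
    have h : w k = fromBlocks (N ^ k).toBlocks₁₁ (N ^ k).toBlocks₁₂ (N ^ k).toBlocks₂₁
        (N ^ k).toBlocks₂₂ *ᵥ Sum.elim u₀ u₀ := by rw [fromBlocks_toBlocks]
    rw [h, fromBlocks_mulVec, hu, hM, add_mulVec]
    simp
  have hdouble : ∀ k, w k = Sum.elim (u k) (u (-k)) := by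
    intro k
    ext i
    rcases i with i | i
    · simp [huw]
    · simp [huw, hswap k]
  have hu0 : u 0 = u₀ := by
    ext i
    simp [huw, hw0]
  simp only [hdouble] at hw
  refine ⟨(reflection_iff_recurrence A B F G u).2 hw, hu0, fun v hv hv0 => ?_⟩
  ext k i
  have h := eq_of_recurrence (y := fun k => Sum.elim (v k) (v (-k)))
    (z := fun k => Sum.elim (u k) (u (-k))) h1 h2
    ((reflection_iff_recurrence A B F G v).1 hv) hw (by simp [hv0, hu0]) k
  exact congrFun h (Sum.inl i)
end
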